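/- arXiv:2503.02243 — 4 statements merged into one kernel-verified Lean document; each statement's English description precedes it below -/
import Mathlib

section
/- For every integer n ≥ 1 and every x ≥ 0, B_n(t;x) = (ξ'(p_n(x))/ξ(p_n(x)))·x + (1/n)·[ S'(1)/S(1) + V'(1)·ξ'(p_n(x))/ξ(p_n(x)) ], where B_n(t;x) denotes the operator applied to the identity function t ↦ t. -/
open Real MeasureTheory Filter Topology

/-- `p_n(x) = n² x² T(1) + n x U(1) + V(1)`. -/
noncomputable def pnx (T U V : ℝ → ℝ) (n : ℕ) (x : ℝ) : ℝ :=
  (n : ℝ) ^ 2 * x ^ 2 * T 1 + (n : ℝ) * x * U 1 + V 1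

/-- The Boas–Buck type operator `B_n(f;x)`. -/
noncomputable def Bop (ξ S T U V : ℝ → ℝ) (Θ : ℕ → ℝ → ℝ) (n : ℕ) (f : ℝ → ℝ) (x : ℝ) : ℝ :=
  (S 1 * ξ (pnx T U V n x))⁻¹ * ∑' j : ℕ, Θ j ((n : ℝ) * x) * f ((j : ℝ) / (n : ℝ))

/-!
Applying the Euler operator `s d/ds` to the generating relation and putting `s = 1` turns the left
side into the first moment `∑ j Θ_j(y)`, while on the right side the product and chain rules give
`S'(1) ξ(P) + S(1) ξ'(P) (y² T'(1) + y U'(1) + V'(1))` with `P = y² T(1) + y U(1) + V(1)`. For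
`y = n x` one has `P = p_n(x)`, and dividing by `n S(1) ξ(P)` gives the value of the operator.
-/

section PowerSeries

variable {𝕜 E : Type*} [NormedAddCommGroup E]

theorem hasFPowerSeriesOnBall_of_hasSum [DenselyNormedField 𝕜] [NormedSpace 𝕜 E] {f : 𝕜 → E}
    {p : FormalMultilinearSeries 𝕜 𝕜 E} {x : 𝕜} {r : ENNReal} (hr : 0 < r)
    (h : ∀ y ∈ Metric.eball (0 : 𝕜) r, HasSum (fun n => p n fun _ => y) (f (x + y))) :
    HasFPowerSeriesOnBall f p x r where
  r_le := by
    refine ENNReal.le_of_forall_nnreal_lt fun s hs => ?_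
    obtain ⟨t, hst, htr⟩ := ENNReal.lt_iff_exists_nnreal_btwn.mp hs
    obtain ⟨z, hsz, hzt⟩ := NormedField.exists_lt_nnnorm_lt 𝕜 (ENNReal.coe_lt_coe.mp hst)
    have hz : z ∈ Metric.eball (0 : 𝕜) r := by
      rw [mem_eball_zero_iff]
      exact (ENNReal.coe_lt_coe.mpr hzt).trans htr
    have hterms : Tendsto (fun n => ‖p n‖ * (‖z‖₊ : ℝ) ^ n) atTop (𝓝 0) := by
      simpa [norm_smul, mul_comm] using (h z hz).summable.tendsto_atTop_zero.norm
    exact (ENNReal.coe_le_coe.mpr hsz.le).trans (p.le_radius_of_tendsto hterms)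
  r_pos := hr
  hasSum hy := h _ hy

theorem hasSum_nsmul_fderiv_of_hasFPowerSeriesOnBall [NontriviallyNormedField 𝕜]
    {D : Type*} [NormedAddCommGroup D] [NormedSpace 𝕜 D] [NormedSpace 𝕜 E] [CompleteSpace E]
    {f : D → E} {p : FormalMultilinearSeries 𝕜 D E} {x y : D} {r : ENNReal}
    (h : HasFPowerSeriesOnBall f p x r) (hy : y ∈ Metric.eball (0 : D) r) :
    HasSum (fun n => n • p n fun _ => y) (fderiv 𝕜 f (x + y) y) := by
  have hsucc : HasSum (fun n => (n + 1) • p (n + 1) fun _ => y) (fderiv 𝕜 f (x + y) y) := by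
    simpa only [ContinuousLinearMap.apply_apply, p.derivSeries_apply_diag] using
      (ContinuousLinearMap.apply 𝕜 E y).hasSum (h.fderiv.hasSum hy)
  simpa using (hasSum_nat_add_iff (f := fun n => n • p n fun _ => y) 1).mp hsucc

variable [DenselyNormedField 𝕜] {a : ℕ → 𝕜} {f : 𝕜 → 𝕜} {r : ENNReal}

theorem hasFPowerSeriesOnBall_ofScalars_of_hasSum (hr : 0 < r)
    (h : ∀ z ∈ Metric.eball (0 : 𝕜) r, HasSum (fun n => a n * z ^ n) (f z)) :
    HasFPowerSeriesOnBall f (.ofScalars 𝕜 a) 0 r :=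
  hasFPowerSeriesOnBall_of_hasSum hr fun z hz => by
    simpa [FormalMultilinearSeries.ofScalars_apply_eq, mul_comm] using h z hz

variable [CompleteSpace 𝕜]

theorem hasSum_natCast_mul_deriv_of_hasSum
    (h : ∀ z ∈ Metric.eball (0 : 𝕜) r, HasSum (fun n => a n * z ^ n) (f z))
    {z : 𝕜} (hz : z ∈ Metric.eball (0 : 𝕜) r) :
    HasSum (fun n => n * (a n * z ^ n)) (z * deriv f z) := by
  have hf := hasFPowerSeriesOnBall_ofScalars_of_hasSum (Metric.pos_of_mem_eball hz) h
  simpa [FormalMultilinearSeries.ofScalars_apply_eq, fderiv_eq_smul_deriv,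
    mul_comm (a _)] using
    hasSum_nsmul_fderiv_of_hasFPowerSeriesOnBall hf hz

theorem differentiableAt_of_hasSum_mul_pow_add {k : ℕ}
    (h : ∀ z ∈ Metric.eball (0 : 𝕜) r, HasSum (fun n => a n * z ^ (n + k)) (f z))
    {z : 𝕜} (hz : z ∈ Metric.eball (0 : 𝕜) r) : DifferentiableAt 𝕜 f z := by
  let b : ℕ → 𝕜 := fun n => if n < k then 0 else a (n - k)
  have hb : ∀ w ∈ Metric.eball (0 : 𝕜) r, HasSum (fun n => b n * w ^ n) (f w) := by
    intro w hw
    have hinit : ∑ n ∈ Finset.range k, b n * w ^ n = 0 :=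
      Finset.sum_eq_zero fun n hn => by simp [b, Finset.mem_range.mp hn]
    rw [← hasSum_nat_add_iff' k, hinit, sub_zero]
    simpa [b] using h w hw
  exact (hasFPowerSeriesOnBall_ofScalars_of_hasSum (Metric.pos_of_mem_eball hz) hb).differentiableOn
    |>.differentiableAt (Metric.isOpen_eball.mem_nhds hz)

theorem differentiableAt_of_hasSum_mul_pow_add_of_mem_Ioo {a : ℕ → ℝ} {f : ℝ → ℝ} {ρ : ℝ} {k : ℕ}
    (h : ∀ s ∈ Set.Ioo (-ρ) ρ, HasSum (fun n => a n * s ^ (n + k)) (f s))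
    {s : ℝ} (hs : s ∈ Set.Ioo (-ρ) ρ) : DifferentiableAt ℝ f s := by
  rw [← Real.ball_zero_eq_Ioo, ← Metric.eball_ofReal] at h hs
  exact differentiableAt_of_hasSum_mul_pow_add h hs

end PowerSeries

section BoasBuck

variable {ρ : ℝ} {ξ S T U V : ℝ → ℝ}

theorem deriv_boasBuck {y s : ℝ} (hS : DifferentiableAt ℝ S s) (hT : DifferentiableAt ℝ T s)
    (hU : DifferentiableAt ℝ U s) (hV : DifferentiableAt ℝ V s)
    (hξ : DifferentiableAt ℝ ξ (y ^ 2 * T s + y * U s + V s)) :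
    deriv (fun s => S s * ξ (y ^ 2 * T s + y * U s + V s)) s =
      deriv S s * ξ (y ^ 2 * T s + y * U s + V s) +
        S s * (deriv ξ (y ^ 2 * T s + y * U s + V s) *
          (y ^ 2 * deriv T s + y * deriv U s + deriv V s)) := by
  have hinner := ((hT.hasDerivAt.const_mul (y ^ 2)).add (hU.hasDerivAt.const_mul y)).add
    hV.hasDerivAt
  exact (hS.hasDerivAt.mul (hξ.hasDerivAt.comp s hinner)).deriv

theorem hasSum_mul_natCast_of_boasBuck {θ : ℕ → ℝ} {y : ℝ} (hρ : 1 < ρ)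
    (hgen : ∀ s ∈ Set.Ioo (-ρ) ρ,
      HasSum (fun j => θ j * s ^ j) (S s * ξ (y ^ 2 * T s + y * U s + V s)))
    (hS : DifferentiableAt ℝ S 1) (hT : DifferentiableAt ℝ T 1)
    (hU : DifferentiableAt ℝ U 1) (hV : DifferentiableAt ℝ V 1)
    (hξ : DifferentiableAt ℝ ξ (y ^ 2 * T 1 + y * U 1 + V 1)) :
    HasSum (fun j => θ j * j)
      (deriv S 1 * ξ (y ^ 2 * T 1 + y * U 1 + V 1) +
        S 1 * (deriv ξ (y ^ 2 * T 1 + y * U 1 + V 1) *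
          (y ^ 2 * deriv T 1 + y * deriv U 1 + deriv V 1))) := by
  rw [← Real.ball_zero_eq_Ioo, ← Metric.eball_ofReal] at hgen
  have hone : (1 : ℝ) ∈ Metric.eball 0 (ENNReal.ofReal ρ) := by
    simpa [Metric.eball_ofReal] using hρ
  rw [← deriv_boasBuck hS hT hU hV hξ]
  simpa [mul_comm] using hasSum_natCast_mul_deriv_of_hasSum hgen hone

theorem stmt1_general {Θ : ℕ → ℝ → ℝ} {n : ℕ} {x : ℝ} (hn : n ≠ 0) (hρ : 1 < ρ)
    (hgen : ∀ s ∈ Set.Ioo (-ρ) ρ, HasSum (fun j => Θ j (n * x) * s ^ j)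
      (S s * ξ ((n * x) ^ 2 * T s + n * x * U s + V s)))
    (hS : DifferentiableAt ℝ S 1) (hT : DifferentiableAt ℝ T 1)
    (hU : DifferentiableAt ℝ U 1) (hV : DifferentiableAt ℝ V 1)
    (hξ : DifferentiableAt ℝ ξ (pnx T U V n x))
    (hS1 : S 1 ≠ 0) (hξp : ξ (pnx T U V n x) ≠ 0) :
    Bop ξ S T U V Θ n (fun t => t) x =
      deriv ξ (pnx T U V n x) / ξ (pnx T U V n x) * (n * x ^ 2 * deriv T 1 + x * deriv U 1) +
        1 / n * (deriv S 1 / S 1 +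
          deriv V 1 * (deriv ξ (pnx T U V n x) / ξ (pnx T U V n x))) := by
  have hp : pnx T U V n x = (n * x) ^ 2 * T 1 + n * x * U 1 + V 1 := by rw [pnx, mul_pow]
  have hmoment := hasSum_mul_natCast_of_boasBuck hρ hgen hS hT hU hV (hp ▸ hξ)
  rw [← hp] at hmoment
  have hn' : (n : ℝ) ≠ 0 := Nat.cast_ne_zero.mpr hn
  simp only [Bop, ← mul_div_assoc]
  rw [tsum_div_const, hmoment.tsum_eq]
  field_simp
  ring

end BoasBuck

theorem stmt1
    (ρ : ℝ) (hρ : 1 < ρ)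
    (ξ S T U V : ℝ → ℝ) (Θ : ℕ → ℝ → ℝ)
    (p q r u v : ℕ → ℝ)
    (hξser : ∀ t : ℝ, HasSum (fun j : ℕ => p j * t ^ j) (ξ t))
    (hξnn : ∀ t : ℝ, 0 ≤ ξ t)
    (hSser : ∀ s ∈ Set.Ioo (-ρ) ρ, HasSum (fun j : ℕ => q j * s ^ j) (S s))
    (hTser : ∀ s ∈ Set.Ioo (-ρ) ρ, HasSum (fun j : ℕ => r j * s ^ (j + 1)) (T s))
    (hUser : ∀ s ∈ Set.Ioo (-ρ) ρ, HasSum (fun j : ℕ => u j * s ^ (j + 2)) (U s))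
    (hVser : ∀ s ∈ Set.Ioo (-ρ) ρ, HasSum (fun j : ℕ => v j * s ^ (j + 3)) (V s))
    (hS1 : 0 < S 1)
    (hT'1 : deriv T 1 = 0) (hT''1 : deriv (deriv T) 1 = 0) (hU'1 : deriv U 1 = 1)
    (hΘnn : ∀ (j : ℕ) (y : ℝ), 0 ≤ y → 0 ≤ Θ j y)
    (hgen : ∀ y : ℝ, 0 ≤ y → ∀ s ∈ Set.Ioo (-ρ) ρ,
      HasSum (fun j : ℕ => Θ j y * s ^ j) (S s * ξ (y ^ 2 * T s + y * U s + V s)))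
    (hξp : ∀ (m : ℕ), 1 ≤ m → ∀ y : ℝ, 0 ≤ y → 0 < ξ (pnx T U V m y))
    (n : ℕ) (hn : 1 ≤ n) (x : ℝ) (hx : 0 ≤ x) :
    Bop ξ S T U V Θ n (fun t => t) x =
      deriv ξ (pnx T U V n x) / ξ (pnx T U V n x) * x +
        (1 / (n : ℝ)) * (deriv S 1 / S 1 +
          deriv V 1 * (deriv ξ (pnx T U V n x) / ξ (pnx T U V n x))) := by
  have hone : (1 : ℝ) ∈ Set.Ioo (-ρ) ρ := ⟨by linarith, hρ⟩
  simpa [hT'1, hU'1] using stmt1_general (Nat.one_le_iff_ne_zero.mp hn) hρ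
    (hgen (n * x) (by positivity))
    (differentiableAt_of_hasSum_mul_pow_add_of_mem_Ioo (k := 0) hSser hone)
    (differentiableAt_of_hasSum_mul_pow_add_of_mem_Ioo hTser hone)
    (differentiableAt_of_hasSum_mul_pow_add_of_mem_Ioo hUser hone)
    (differentiableAt_of_hasSum_mul_pow_add_of_mem_Ioo hVser hone)
    (differentiableAt_of_hasSum_mul_pow_add (k := 0) (r := ⊤) (fun t _ => hξser t) (by simp))
    hS1.ne' (hξp n hn x hx).ne'
end

section
/- For every integer n ≥ 1 and every x ≥ 0, B_n(t²;x) = (ξ''(p_n(x))/ξ(p_n(x)))·x² + (x/n)·[ (ξ'(p_n(x))/ξ(p_n(x)))·(2S'(1)/S(1) + U''(1) + 1) + 2V'(1)·ξ''(p_n(x))/ξ(p_n(x)) ] + (1/n²)·[ (S''(1)+S'(1))/S(1) + (2S'(1)V'(1)/S(1) + V''(1) + V'(1))·ξ'(p_n(x))/ξ(p_n(x)) + (V'(1))²·ξ''(p_n(x))/ξ(p_n(x)) ], where B_n(t²;x) denotes the operator applied to the function t ↦ t². -/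
open Real MeasureTheory Filter Topology

/-! The Euler operator `θ = s d/ds` multiplies the `j`-th coefficient of a power series by `j`, so
`∑ j² Θ_j(y) = (θ² G)(1) = G''(1) + G'(1)` for `G(s) = S(s) ξ(φ(s))` with
`φ(s) = y² T(s) + y U(s) + V(s)`. For `y = n x` one has `φ(1) = p_n(x)`, while `T'(1) = T''(1) = 0`
and `U'(1) = 1` give `φ'(1) = n x + V'(1)` and `φ''(1) = n x U''(1) + V''(1)`. The product and chain
rules then evaluate `G''(1) + G'(1)`; dividing by `n² S(1) ξ(p_n(x))` yields the formula. -/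

section PowerSeries

theorem hasSum_deriv_of_hasFPowerSeriesOnBall {𝕜 E : Type*} [NontriviallyNormedField 𝕜]
    [NormedAddCommGroup E] [NormedSpace 𝕜 E] [CompleteSpace E] {F : 𝕜 → E}
    {p : FormalMultilinearSeries 𝕜 𝕜 E} {c s : 𝕜} {R : ENNReal}
    (hF : HasFPowerSeriesOnBall F p c R) (hs : s ∈ Metric.eball 0 R) :
    HasSum (fun j : ℕ => s ^ j • (j + 1) • p.coeff (j + 1)) (deriv F (c + s)) := by
  simpa using (hF.fderiv.hasSum hs).mapL (ContinuousLinearMap.apply 𝕜 E 1)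

variable {𝕜 E : Type*} [DenselyNormedField 𝕜] [NormedAddCommGroup E] [NormedSpace 𝕜 E]
  {a : ℕ → E} {F : 𝕜 → E} {R : ENNReal}

theorem hasFPowerSeriesOnBall_of_hasSum_pow_smul (hR : 0 < R)
    (h : ∀ s ∈ Metric.eball (0 : 𝕜) R, HasSum (fun j : ℕ => s ^ j • a j) (F s)) :
    HasFPowerSeriesOnBall F (fun j => ContinuousMultilinearMap.mkPiRing 𝕜 (Fin j) (a j)) 0 R where
  r_pos := hR
  hasSum {s} hs := by simpa using h s hs
  r_le := by
    refine ENNReal.le_of_forall_nnreal_lt fun r hr => ?_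
    obtain ⟨r', hrr', hr'⟩ := ENNReal.lt_iff_exists_nnreal_btwn.1 hr
    obtain ⟨s, hrs, hsr'⟩ := NormedField.exists_lt_nnnorm_lt 𝕜 (ENNReal.coe_lt_coe.1 hrr')
    have hs : s ∈ Metric.eball (0 : 𝕜) R :=
      mem_eball_zero_iff.2 ((ENNReal.coe_lt_coe.2 hsr').trans hr')
    refine (ENNReal.coe_le_coe.2 hrs.le).trans
      (FormalMultilinearSeries.le_radius_of_tendsto _ (l := 0) ?_)
    simpa [norm_smul, mul_comm] using (h s hs).summable.tendsto_atTop_zero.norm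

variable [CompleteSpace E]

theorem hasSum_pow_smul_natCast_smul_of_hasSum_pow_smul
    (h : ∀ s ∈ Metric.eball (0 : 𝕜) R, HasSum (fun j : ℕ => s ^ j • a j) (F s)) :
    ∀ s ∈ Metric.eball (0 : 𝕜) R, HasSum (fun j : ℕ => s ^ j • (j : 𝕜) • a j) (s • deriv F s) := by
  intro s hs
  have hF := hasFPowerSeriesOnBall_of_hasSum_pow_smul (Metric.pos_of_mem_eball hs) h
  have hderiv := (hasSum_deriv_of_hasFPowerSeriesOnBall hF hs).const_smul s
  rw [← hasSum_nat_add_iff' 1]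
  simpa [pow_succ', mul_smul, FormalMultilinearSeries.coeff, ← Nat.cast_smul_eq_nsmul 𝕜]
    using hderiv

theorem hasSum_natCast_sq_smul_of_hasSum_pow_smul (hR : 1 < R)
    (h : ∀ s ∈ Metric.eball (0 : 𝕜) R, HasSum (fun j : ℕ => s ^ j • a j) (F s)) :
    HasSum (fun j : ℕ => (j : 𝕜) ^ 2 • a j) (deriv (deriv F) 1 + deriv F 1) := by
  have h_one : (1 : 𝕜) ∈ Metric.eball 0 R := by simpa using hR
  have hF := hasFPowerSeriesOnBall_of_hasSum_pow_smul (Metric.pos_of_mem_eball h_one) h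
  have hF' : DifferentiableAt 𝕜 (deriv F) 1 :=
    (hF.analyticAt_of_mem h_one).deriv.differentiableAt
  have hEuler := hasSum_pow_smul_natCast_smul_of_hasSum_pow_smul
    (hasSum_pow_smul_natCast_smul_of_hasSum_pow_smul h) 1 h_one
  rw [deriv_fun_smul differentiableAt_fun_id hF'] at hEuler
  simpa [smul_smul, sq] using hEuler

theorem analyticAt_of_hasSum_pow_add_smul (k : ℕ)
    (h : ∀ s ∈ Metric.eball (0 : 𝕜) R, HasSum (fun j : ℕ => s ^ (j + k) • a j) (F s))
    {s : 𝕜} (hs : s ∈ Metric.eball (0 : 𝕜) R) : AnalyticAt 𝕜 F s := by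
  have hshift (t : 𝕜) (ht : t ∈ Metric.eball (0 : 𝕜) R) :
      HasSum (fun j => t ^ j • Function.extend (· + k) a 0 j) (F t) := by
    rw [← (add_left_injective k).hasSum_iff fun j hj => by
      simp [Function.extend_apply' _ _ _ hj]]
    simpa only [Function.comp_def, (add_left_injective k).extend_apply] using h t ht
  exact (hasFPowerSeriesOnBall_of_hasSum_pow_smul (Metric.pos_of_mem_eball hs) hshift)
    |>.analyticAt_of_mem hs

end PowerSeries

theorem contDiffAt_of_hasSum_mul_pow {a : ℕ → ℝ} {F : ℝ → ℝ} {ρ s : ℝ} {m : WithTop ℕ∞} (k : ℕ)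
    (h : ∀ s ∈ Set.Ioo (-ρ) ρ, HasSum (fun j : ℕ => a j * s ^ (j + k)) (F s))
    (hs : s ∈ Set.Ioo (-ρ) ρ) : ContDiffAt ℝ m F s := by
  have h_eball : Metric.eball (0 : ℝ) (.ofReal ρ) = Set.Ioo (-ρ) ρ := by
    rw [Metric.eball_ofReal, Real.ball_zero_eq_Ioo]
  rw [← h_eball] at h hs
  exact (analyticAt_of_hasSum_pow_add_smul k
    (by simpa only [smul_eq_mul, mul_comm] using h) hs).contDiffAt

section Derivatives

variable {𝕜 : Type*} [NontriviallyNormedField 𝕜] {f g h φ : 𝕜 → 𝕜} {x : 𝕜}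

theorem iteratedDeriv_two (f : 𝕜 → 𝕜) : iteratedDeriv 2 f = deriv (deriv f) := by
  rw [iteratedDeriv_succ, iteratedDeriv_one]

theorem deriv_fun_mul_comp (hf : DifferentiableAt 𝕜 f x)
    (hg : DifferentiableAt 𝕜 g (φ x)) (hφ : DifferentiableAt 𝕜 φ x) :
    deriv (fun t => f t * g (φ t)) x =
      deriv f x * g (φ x) + f x * (deriv g (φ x) * deriv φ x) := by
  rw [← deriv_comp x hg hφ]
  exact deriv_mul hf (hg.comp x hφ)

theorem deriv_deriv_fun_mul_comp (hf : ContDiffAt 𝕜 2 f x)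
    (hg : ContDiffAt 𝕜 2 g (φ x)) (hφ : ContDiffAt 𝕜 2 φ x) :
    deriv (deriv fun t => f t * g (φ t)) x =
      deriv (deriv f) x * g (φ x) + 2 * deriv f x * (deriv g (φ x) * deriv φ x) +
        f x * (deriv (deriv g) (φ x) * deriv φ x ^ 2 + deriv g (φ x) * deriv (deriv φ) x) := by
  simp only [← iteratedDeriv_two]
  calc iteratedDeriv 2 (f * (g ∘ φ)) x
      = iteratedDeriv 2 f x * (g ∘ φ) x + 2 * deriv f x * deriv (g ∘ φ) x +
          f x * iteratedDeriv 2 (g ∘ φ) x := by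
        rw [iteratedDeriv_mul hf (hg.comp x hφ)]
        simp only [Finset.sum_range_succ, Finset.sum_range_zero, Nat.choose_zero_right,
          Nat.choose_one_right, Nat.choose_self, Nat.sub_zero, Nat.sub_self, Nat.reduceSub,
          iteratedDeriv_zero, iteratedDeriv_one]
        push_cast
        ring
    _ = _ := by
        rw [deriv_comp x (hg.differentiableAt two_ne_zero) (hφ.differentiableAt two_ne_zero),
          iteratedDeriv_comp_two hg hφ, Function.comp_apply]

theorem deriv_fun_const_mul_add_const_mul_add (c d : 𝕜) (hf : DifferentiableAt 𝕜 f x)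
    (hg : DifferentiableAt 𝕜 g x) (hh : DifferentiableAt 𝕜 h x) :
    deriv (fun t => c * f t + d * g t + h t) x = c * deriv f x + d * deriv g x + deriv h x := by
  rw [deriv_fun_add (by fun_prop) hh, deriv_fun_add (by fun_prop) (by fun_prop),
    deriv_const_mul c hf, deriv_const_mul d hg]

theorem deriv_deriv_fun_const_mul_add_const_mul_add (c d : 𝕜) (hf : ContDiffAt 𝕜 2 f x)
    (hg : ContDiffAt 𝕜 2 g x) (hh : ContDiffAt 𝕜 2 h x) :
    deriv (deriv fun t => c * f t + d * g t + h t) x =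
      c * deriv (deriv f) x + d * deriv (deriv g) x + deriv (deriv h) x := by
  simp only [← iteratedDeriv_two]
  rw [iteratedDeriv_fun_add (by fun_prop) hh, iteratedDeriv_fun_add (by fun_prop) (by fun_prop),
    iteratedDeriv_const_mul c hf, iteratedDeriv_const_mul d hg]

end Derivatives

section BoasBuck

variable {ρ : ℝ} {ξ S T U V : ℝ → ℝ} {Θ : ℕ → ℝ → ℝ} {n : ℕ} {x : ℝ}

theorem Bop_sq_eq_of_hasSum {G : ℝ → ℝ} (hρ : 1 < ρ)
    (hG : ∀ s ∈ Set.Ioo (-ρ) ρ, HasSum (fun j : ℕ => Θ j (n * x) * s ^ j) (G s)) :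
    Bop ξ S T U V Θ n (fun t => t ^ 2) x =
      (S 1 * ξ (pnx T U V n x))⁻¹ * ((deriv (deriv G) 1 + deriv G 1) / (n : ℝ) ^ 2) := by
  have hmoment : HasSum (fun j : ℕ => (j : ℝ) ^ 2 * Θ j (n * x))
      (deriv (deriv G) 1 + deriv G 1) := by
    refine hasSum_natCast_sq_smul_of_hasSum_pow_smul (R := .ofReal ρ) (by simpa using hρ) ?_
    simpa only [Metric.eball_ofReal, Real.ball_zero_eq_Ioo, smul_eq_mul, mul_comm] using hG
  rw [Bop, ← (hmoment.div_const _).tsum_eq]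
  congr! 3 with j
  ring

theorem Bop_sq_eq_of_hasSum_mul_comp {φ : ℝ → ℝ} (hρ : 1 < ρ) (hpnx : pnx T U V n x = φ 1)
    (hS : ContDiffAt ℝ 2 S 1) (hξ : ContDiffAt ℝ 2 ξ (pnx T U V n x)) (hφ : ContDiffAt ℝ 2 φ 1)
    (hS0 : S 1 ≠ 0) (hξ0 : ξ (pnx T U V n x) ≠ 0)
    (hgen : ∀ s ∈ Set.Ioo (-ρ) ρ, HasSum (fun j : ℕ => Θ j (n * x) * s ^ j) (S s * ξ (φ s))) :
    Bop ξ S T U V Θ n (fun t => t ^ 2) x =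
      ((deriv (deriv S) 1 + deriv S 1) / S 1 +
        (2 * deriv S 1 * deriv φ 1 / S 1 + deriv (deriv φ) 1 + deriv φ 1) *
          (deriv ξ (pnx T U V n x) / ξ (pnx T U V n x)) +
        deriv φ 1 ^ 2 * (deriv (deriv ξ) (pnx T U V n x) / ξ (pnx T U V n x))) / (n : ℝ) ^ 2 := by
  rw [Bop_sq_eq_of_hasSum hρ hgen]
  rw [hpnx] at hξ hξ0 ⊢
  rw [deriv_deriv_fun_mul_comp hS hξ hφ, deriv_fun_mul_comp (hS.differentiableAt two_ne_zero)
    (hξ.differentiableAt two_ne_zero) (hφ.differentiableAt two_ne_zero)]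
  field_simp
  ring

theorem stmt2_general (hρ : 1 < ρ) (hn : n ≠ 0)
    (hξ : ContDiffAt ℝ 2 ξ (pnx T U V n x)) (hS : ContDiffAt ℝ 2 S 1)
    (hT : ContDiffAt ℝ 2 T 1) (hU : ContDiffAt ℝ 2 U 1) (hV : ContDiffAt ℝ 2 V 1)
    (hξ0 : ξ (pnx T U V n x) ≠ 0) (hS0 : S 1 ≠ 0)
    (hT'1 : deriv T 1 = 0) (hT''1 : deriv (deriv T) 1 = 0) (hU'1 : deriv U 1 = 1)
    (hgen : ∀ s ∈ Set.Ioo (-ρ) ρ, HasSum (fun j : ℕ => Θ j (n * x) * s ^ j)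
      (S s * ξ ((n * x) ^ 2 * T s + n * x * U s + V s))) :
    Bop ξ S T U V Θ n (fun t => t ^ 2) x =
      deriv (deriv ξ) (pnx T U V n x) / ξ (pnx T U V n x) * x ^ 2 +
        (x / (n : ℝ)) *
          (deriv ξ (pnx T U V n x) / ξ (pnx T U V n x) *
              (2 * deriv S 1 / S 1 + deriv (deriv U) 1 + 1) +
            2 * deriv V 1 * (deriv (deriv ξ) (pnx T U V n x) / ξ (pnx T U V n x))) +
        (1 / (n : ℝ) ^ 2) *
          ((deriv (deriv S) 1 + deriv S 1) / S 1 +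
            (2 * deriv S 1 * deriv V 1 / S 1 + deriv (deriv V) 1 + deriv V 1) *
              (deriv ξ (pnx T U V n x) / ξ (pnx T U V n x)) +
            (deriv V 1) ^ 2 * (deriv (deriv ξ) (pnx T U V n x) / ξ (pnx T U V n x))) := by
  have hφ' := deriv_fun_const_mul_add_const_mul_add ((n * x) ^ 2) (n * x)
    (hT.differentiableAt two_ne_zero) (hU.differentiableAt two_ne_zero)
    (hV.differentiableAt two_ne_zero)
  have hφ'' := deriv_deriv_fun_const_mul_add_const_mul_add ((n * x) ^ 2) (n * x) hT hU hV
  have hpnx : pnx T U V n x = (n * x) ^ 2 * T 1 + n * x * U 1 + V 1 := by rw [pnx, mul_pow]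
  rw [Bop_sq_eq_of_hasSum_mul_comp hρ hpnx hS hξ (by fun_prop) hS0 hξ0 hgen, hφ', hφ'',
    hT'1, hT''1, hU'1]
  have hn0 : (n : ℝ) ≠ 0 := Nat.cast_ne_zero.2 hn
  field_simp
  ring

end BoasBuck

theorem stmt2
    (ρ : ℝ) (hρ : 1 < ρ)
    (ξ S T U V : ℝ → ℝ) (Θ : ℕ → ℝ → ℝ)
    (p q r u v : ℕ → ℝ)
    (hξser : ∀ t : ℝ, HasSum (fun j : ℕ => p j * t ^ j) (ξ t))
    (hξnn : ∀ t : ℝ, 0 ≤ ξ t)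
    (hSser : ∀ s ∈ Set.Ioo (-ρ) ρ, HasSum (fun j : ℕ => q j * s ^ j) (S s))
    (hTser : ∀ s ∈ Set.Ioo (-ρ) ρ, HasSum (fun j : ℕ => r j * s ^ (j + 1)) (T s))
    (hUser : ∀ s ∈ Set.Ioo (-ρ) ρ, HasSum (fun j : ℕ => u j * s ^ (j + 2)) (U s))
    (hVser : ∀ s ∈ Set.Ioo (-ρ) ρ, HasSum (fun j : ℕ => v j * s ^ (j + 3)) (V s))
    (hS1 : 0 < S 1)
    (hT'1 : deriv T 1 = 0) (hT''1 : deriv (deriv T) 1 = 0) (hU'1 : deriv U 1 = 1)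
    (hΘnn : ∀ (j : ℕ) (y : ℝ), 0 ≤ y → 0 ≤ Θ j y)
    (hgen : ∀ y : ℝ, 0 ≤ y → ∀ s ∈ Set.Ioo (-ρ) ρ,
      HasSum (fun j : ℕ => Θ j y * s ^ j) (S s * ξ (y ^ 2 * T s + y * U s + V s)))
    (hξp : ∀ (m : ℕ), 1 ≤ m → ∀ y : ℝ, 0 ≤ y → 0 < ξ (pnx T U V m y))
    (n : ℕ) (hn : 1 ≤ n) (x : ℝ) (hx : 0 ≤ x) :
    Bop ξ S T U V Θ n (fun t => t ^ 2) x =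
      deriv (deriv ξ) (pnx T U V n x) / ξ (pnx T U V n x) * x ^ 2 +
        (x / (n : ℝ)) *
          (deriv ξ (pnx T U V n x) / ξ (pnx T U V n x) *
              (2 * deriv S 1 / S 1 + deriv (deriv U) 1 + 1) +
            2 * deriv V 1 * (deriv (deriv ξ) (pnx T U V n x) / ξ (pnx T U V n x))) +
        (1 / (n : ℝ) ^ 2) *
          ((deriv (deriv S) 1 + deriv S 1) / S 1 +
            (2 * deriv S 1 * deriv V 1 / S 1 + deriv (deriv V) 1 + deriv V 1) *
              (deriv ξ (pnx T U V n x) / ξ (pnx T U V n x)) +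
            (deriv V 1) ^ 2 * (deriv (deriv ξ) (pnx T U V n x) / ξ (pnx T U V n x))) := by
  have h1 : (1 : ℝ) ∈ Set.Ioo (-ρ) ρ := ⟨by linarith, hρ⟩
  have hξ (t : ℝ) : ContDiffAt ℝ 2 ξ t :=
    contDiffAt_of_hasSum_mul_pow 0 (fun s _ => hξser s) (abs_lt.1 (lt_add_one |t|))
  exact stmt2_general hρ (Nat.one_le_iff_ne_zero.1 hn) (hξ _)
    (contDiffAt_of_hasSum_mul_pow 0 hSser h1) (contDiffAt_of_hasSum_mul_pow 1 hTser h1)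
    (contDiffAt_of_hasSum_mul_pow 2 hUser h1) (contDiffAt_of_hasSum_mul_pow 3 hVser h1)
    (hξp n hn x hx).ne' hS1.ne' hT'1 hT''1 hU'1 (hgen (n * x) (by positivity))
end

section
/- For every integer n ≥ 2 and every x ≥ 0, B̃_n(t²;x) = (n/(n−1))·(ξ''(p_n(x))/ξ(p_n(x)))·x² + (x/(n−1))·[ 2V'(1)·ξ''(p_n(x))/ξ(p_n(x)) + (2 + 2S'(1)/S(1) + U''(1))·ξ'(p_n(x))/ξ(p_n(x)) ] + (1/(n(n−1)))·[ (V'(1))²·ξ''(p_n(x))/ξ(p_n(x)) + (2(S'(1)/S(1))V'(1) + 2V'(1) + V''(1))·ξ'(p_n(x))/ξ(p_n(x)) + (2S'(1)+S''(1))/S(1) ], where B̃_n(t²;x) denotes the operator applied to the function t ↦ t². -/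
open Real MeasureTheory Filter Topology

/-- The Euler Beta function value `B(j, n+1) = Γ(j)Γ(n+1)/Γ(j+n+1)`. -/
noncomputable def betaB (j n : ℕ) : ℝ :=
  Real.Gamma (j : ℝ) * Real.Gamma ((n : ℝ) + 1) / Real.Gamma ((j : ℝ) + (n : ℝ) + 1)

/-- The Baskakov–Durrmeyer type operator `B̃_n(f;x)`. -/
noncomputable def BDop (ξ S T U V : ℝ → ℝ) (Θ : ℕ → ℝ → ℝ) (n : ℕ) (f : ℝ → ℝ) (x : ℝ) : ℝ :=
  (S 1 * ξ (pnx T U V n x))⁻¹ *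
    (Θ 0 ((n : ℝ) * x) * f 0 +
      ∑' j : ℕ, (Θ (j + 1) ((n : ℝ) * x) / betaB (j + 1) n) *
        ∫ s in Set.Ioi (0 : ℝ), s ^ j * (1 + s) ^ (-((n : ℝ) + (j : ℝ) + 2)) * f s)

/-
Against the weight `s^(j-1) (1+s)^(-(n+j+1)) / B(j, n+1)` the power `s^k` integrates to the rising
factorial `j (j+1) ⋯ (j+k-1)` divided by the falling factorial `n (n-1) ⋯ (n-k+1)`. The numerator
is also the `k`-th derivative of `s^(j+k-1)` at `s = 1`, so the `k`-th moment of the operator is, up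
to normalisation, the `k`-th derivative at `1` of `s^(k-1) G(s)`, with `G(s) = ∑ Θ_j(nx) s^j` the
generating function. For `k = 2` the Leibniz and chain rules expand it, since
`s G(s) = (s S(s)) ξ(φ(s))` with `φ(s) = (nx)² T(s) + nx U(s) + V(s)`.
-/

open Metric Set FormalMultilinearSeries

section PowerSeries

variable {𝕜 : Type*} {a : ℕ → 𝕜} {f : 𝕜 → 𝕜} {ρ : ℝ} {z : 𝕜}

theorem hasSum_extend_add_mul_pow [CommSemiring 𝕜] [TopologicalSpace 𝕜] {w : 𝕜} {k : ℕ}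
    (h : HasSum (fun j => a j * z ^ (j + k)) w) :
    HasSum (fun j => Function.extend (· + k) a 0 j * z ^ j) w := by
  have hinj : Function.Injective (· + k : ℕ → ℕ) := add_left_injective k
  refine (hinj.hasSum_iff fun j hj => ?_).mp ?_
  · rw [Function.extend_apply' _ _ _ hj, Pi.zero_apply, zero_mul]
  · simpa only [Function.comp_def, hinj.extend_apply] using h

variable [DenselyNormedField 𝕜]

theorem hasFPowerSeriesOnBall_ofScalars (hρ : 0 < ρ)
    (h : ∀ z ∈ ball (0 : 𝕜) ρ, HasSum (fun j => a j * z ^ j) (f z)) :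
    HasFPowerSeriesOnBall f (ofScalars 𝕜 a) 0 (ENNReal.ofReal ρ) where
  r_le := by
    refine ENNReal.le_of_forall_nnreal_lt fun r hr => ?_
    rw [ENNReal.coe_lt_ofReal] at hr
    obtain ⟨z, hrz, hzρ⟩ := NormedField.exists_lt_norm_lt 𝕜 r.2 hr
    have hterms := (h z (mem_ball_zero_iff.mpr hzρ)).summable.tendsto_atTop_zero.norm
    refine le_trans (ENNReal.coe_le_coe.mpr (show r ≤ ‖z‖₊ from hrz.le))
      ((ofScalars 𝕜 a).le_radius_of_tendsto (l := ‖(0 : 𝕜)‖) ?_)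
    simpa only [ofScalars_norm, coe_nnnorm, norm_mul, norm_pow] using hterms
  r_pos := ENNReal.ofReal_pos.mpr hρ
  hasSum := by
    intro y hy
    rw [eball_ofReal] at hy
    simpa only [ofScalars_apply_eq, smul_eq_mul, zero_add] using h y hy

variable [CompleteSpace 𝕜]

theorem contDiffAt_of_hasSum_mul_pow_add {m : WithTop ℕ∞} (k : ℕ)
    (h : ∀ z ∈ ball (0 : 𝕜) ρ, HasSum (fun j => a j * z ^ (j + k)) (f z))
    (hz : z ∈ ball (0 : 𝕜) ρ) : ContDiffAt 𝕜 m f z :=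
  ((hasFPowerSeriesOnBall_ofScalars (pos_of_mem_ball hz)
    fun w hw => hasSum_extend_add_mul_pow (h w hw)).analyticAt_of_mem
      (by rwa [eball_ofReal])).contDiffAt

theorem hasSum_deriv_of_hasSum_mul_pow
    (h : ∀ z ∈ ball (0 : 𝕜) ρ, HasSum (fun j => a j * z ^ j) (f z))
    (hz : z ∈ ball (0 : 𝕜) ρ) :
    HasSum (fun j : ℕ => (j + 1) * a (j + 1) * z ^ j) (deriv f z) := by
  have hd := (hasFPowerSeriesOnBall_ofScalars (pos_of_mem_ball hz) h).fderiv.hasSum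
    (y := z) (by rwa [eball_ofReal])
  have hd1 := hd.mapL (ContinuousLinearMap.apply 𝕜 𝕜 1)
  rw [zero_add] at hd1
  simpa [coeff_ofScalars, mul_comm] using hd1

theorem hasSum_iteratedDeriv_of_hasSum_mul_pow
    (h : ∀ z ∈ ball (0 : 𝕜) ρ, HasSum (fun j => a j * z ^ j) (f z)) (k : ℕ) :
    ∀ z ∈ ball (0 : 𝕜) ρ,
      HasSum (fun j => (j + 1).ascFactorial k * a (j + k) * z ^ j) (iteratedDeriv k f z) := by
  induction k with
  | zero => simpa using h
  | succ k ih =>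
    intro z hz
    rw [iteratedDeriv_succ]
    convert hasSum_deriv_of_hasSum_mul_pow ih hz using 2 with j
    have hasc : (j + 1 : 𝕜) * (j + 1 + 1).ascFactorial k = (j + 1).ascFactorial (k + 1) := by
      rw [Nat.ascFactorial_succ, ← Nat.succ_ascFactorial]
      push_cast
      rfl
    rw [← mul_assoc, hasc, add_right_comm, add_assoc]

end PowerSeries

section IteratedDeriv

variable {𝕜 : Type*} [NontriviallyNormedField 𝕜] {A f g h : 𝕜 → 𝕜} {z : 𝕜}

theorem iteratedDeriv_two_mul_comp
    (hA : ContDiffAt 𝕜 2 A z) (hf : ContDiffAt 𝕜 2 f (g z)) (hg : ContDiffAt 𝕜 2 g z) :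
    iteratedDeriv 2 (fun s => A s * f (g s)) z =
      iteratedDeriv 2 A z * f (g z) + 2 * deriv A z * (deriv f (g z) * deriv g z) +
        A z * (iteratedDeriv 2 f (g z) * deriv g z ^ 2 + deriv f (g z) * iteratedDeriv 2 g z) := by
  have hcomp : deriv (f ∘ g) z = deriv f (g z) * deriv g z :=
    deriv_comp z (hf.differentiableAt two_ne_zero) (hg.differentiableAt two_ne_zero)
  change iteratedDeriv 2 (A * (f ∘ g)) z = _
  rw [iteratedDeriv_mul hA (hf.comp z hg)]
  simp only [Nat.reduceAdd, Finset.sum_range_succ, Finset.range_one, Finset.sum_singleton,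
    Nat.choose_zero_right, Nat.choose_succ_self_right, Nat.choose_self, Nat.cast_one,
    Nat.cast_ofNat, one_mul, tsub_zero, tsub_self, Nat.add_one_sub_one, iteratedDeriv_zero,
    iteratedDeriv_one, iteratedDeriv_comp_two hf hg, hcomp, Function.comp_apply]
  ring

theorem iteratedDeriv_two_id_mul (hf : ContDiffAt 𝕜 2 f z) :
    iteratedDeriv 2 (fun s => s * f s) z = 2 * deriv f z + z * iteratedDeriv 2 f z := by
  rw [iteratedDeriv_fun_mul contDiffAt_fun_id hf]
  simp only [Nat.reduceAdd, Finset.sum_range_succ, Finset.range_one, Finset.sum_singleton,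
    Nat.choose_zero_right, Nat.choose_succ_self_right, Nat.cast_one, Nat.cast_ofNat, one_mul,
    tsub_zero, Nat.add_one_sub_one, iteratedDeriv_one, iteratedDeriv_fun_id, ↓reduceIte,
    one_ne_zero, OfNat.ofNat_ne_zero, OfNat.ofNat_ne_one, mul_one, mul_zero, zero_mul, add_zero]
  ring

theorem iteratedDeriv_mul_add_mul_add {k : ℕ} (hf : ContDiffAt 𝕜 k f z)
    (hg : ContDiffAt 𝕜 k g z) (hh : ContDiffAt 𝕜 k h z) (b c : 𝕜) :
    iteratedDeriv k (fun s => b * f s + c * g s + h s) z =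
      b * iteratedDeriv k f z + c * iteratedDeriv k g z + iteratedDeriv k h z := by
  rw [iteratedDeriv_fun_add (by fun_prop) hh, iteratedDeriv_fun_add (by fun_prop) (by fun_prop),
    iteratedDeriv_const_mul_field, iteratedDeriv_const_mul_field]

end IteratedDeriv

section BetaIntegral

variable {a b : ℝ}

theorem integral_Ioo_rpow_mul_one_sub_rpow (ha : 0 < a) (hb : 0 < b) :
    ∫ t in Ioo (0 : ℝ) 1, t ^ (a - 1) * (1 - t) ^ (b - 1) = ProbabilityTheory.beta a b := by
  rw [ProbabilityTheory.beta_eq_betaIntegralReal a b ha hb, Complex.betaIntegral,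
    ← integral_Ioc_eq_integral_Ioo, ← intervalIntegral.integral_of_le zero_le_one,
    ← Complex.ofReal_re (∫ t in (0 : ℝ)..1, t ^ (a - 1) * (1 - t) ^ (b - 1)),
    ← intervalIntegral.integral_ofReal]
  congr 1
  refine intervalIntegral.integral_congr fun t ht => ?_
  rw [uIcc_of_le zero_le_one] at ht
  push_cast [Complex.ofReal_cpow ht.1, Complex.ofReal_cpow (sub_nonneg.mpr ht.2)]
  rfl

theorem image_div_one_add_Ioi {K : Type*} [Field K] [LinearOrder K] [IsStrictOrderedRing K] :
    (fun s : K => s / (1 + s)) '' Ioi 0 = Ioo 0 1 := by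
  ext t
  constructor
  · rintro ⟨s, hs : 0 < s, rfl⟩
    exact ⟨by positivity, (div_lt_one (by positivity)).mpr (by linarith)⟩
  · rintro ⟨h0, h1⟩
    have h1' : 1 - t ≠ 0 := (sub_pos.mpr h1).ne'
    refine ⟨t / (1 - t), div_pos h0 (sub_pos.mpr h1), ?_⟩
    field_simp
    ring

theorem injOn_div_one_add {K : Type*} [Field K] :
    InjOn (fun s : K => s / (1 + s)) {s | 1 + s ≠ 0} := by
  intro s hs t ht hst
  linear_combination (div_eq_div_iff hs ht).mp hst

theorem hasDerivAt_div_one_add {𝕜 : Type*} [NontriviallyNormedField 𝕜] {s : 𝕜}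
    (hs : 1 + s ≠ 0) : HasDerivAt (fun s => s / (1 + s)) (1 / (1 + s) ^ 2) s :=
  ((hasDerivAt_id' s).fun_div ((hasDerivAt_id' s).const_add 1) hs).congr_deriv (by ring)

theorem integral_Ioi_rpow_mul_one_add_rpow (ha : 0 < a) (hb : 0 < b) :
    ∫ s in Ioi (0 : ℝ), s ^ (a - 1) * (1 + s) ^ (-(a + b)) = ProbabilityTheory.beta a b := by
  have hne : Ioi (0 : ℝ) ⊆ {s | 1 + s ≠ 0} := fun s hs => (add_pos one_pos hs).ne'
  rw [← integral_Ioo_rpow_mul_one_sub_rpow ha hb, ← image_div_one_add_Ioi,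
    integral_image_eq_integral_abs_deriv_smul measurableSet_Ioi
      (fun s hs => (hasDerivAt_div_one_add (hne hs)).hasDerivWithinAt)
      (injOn_div_one_add.mono hne)]
  refine setIntegral_congr_fun measurableSet_Ioi fun s (hs : 0 < s) => ?_
  have h1s : 0 < 1 + s := by linarith
  have hsub : 1 - s / (1 + s) = (1 + s)⁻¹ := by field_simp; ring
  have hexp : (1 + s) ^ (-(a + b)) =
      ((1 + s) ^ 2)⁻¹ * ((1 + s) ^ (a - 1))⁻¹ * ((1 + s) ^ (b - 1))⁻¹ := by
    rw [← rpow_natCast, ← rpow_neg h1s.le, ← rpow_neg h1s.le, ← rpow_neg h1s.le,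
      ← rpow_add h1s, ← rpow_add h1s]
    congr 1
    push_cast
    ring
  simp only [smul_eq_mul]
  rw [abs_of_pos (by positivity), hsub, div_rpow hs.le h1s.le, inv_rpow h1s.le, hexp]
  ring

end BetaIntegral

section Operator

variable {ξ S T U V G : ℝ → ℝ} {Θ : ℕ → ℝ → ℝ} {n : ℕ} {x ρ : ℝ}

theorem betaB_succ_eq_factorial (j n : ℕ) :
    betaB (j + 1) n = j.factorial * n.factorial / (j + n + 1).factorial := by
  have hsum : ((j + 1 : ℕ) : ℝ) + n + 1 = ((j + n + 1 : ℕ) : ℝ) + 1 := by push_cast; ring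
  rw [betaB, hsum, Nat.cast_succ, Gamma_nat_eq_factorial, Gamma_nat_eq_factorial,
    Gamma_nat_eq_factorial]

theorem integral_pow_mul_one_add_rpow_mul_pow {k : ℕ} (hk : k ≤ n) (j : ℕ) :
    ∫ s in Ioi (0 : ℝ), s ^ j * (1 + s) ^ (-((n : ℝ) + j + 2)) * s ^ k =
      (j + k).factorial * (n - k).factorial / (j + n + 1).factorial := by
  have hbeta := integral_Ioi_rpow_mul_one_add_rpow (a := ((j + k : ℕ) : ℝ) + 1)
    (b := ((n - k : ℕ) : ℝ) + 1) (by positivity) (by positivity)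
  have hsum : ((j + k : ℕ) : ℝ) + 1 + ((n - k : ℕ) + 1) = ((j + n + 1 : ℕ) : ℝ) + 1 := by
    push_cast [Nat.cast_sub hk]
    ring
  rw [ProbabilityTheory.beta, hsum, Gamma_nat_eq_factorial, Gamma_nat_eq_factorial,
    Gamma_nat_eq_factorial] at hbeta
  rw [← hbeta]
  refine setIntegral_congr_fun measurableSet_Ioi fun s _ => ?_
  have hexp : (n : ℝ) + j + 2 = ((j + n + 1 : ℕ) : ℝ) + 1 := by push_cast; ring
  simp only [add_sub_cancel_right, rpow_natCast, hexp, pow_add]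
  ring

theorem integral_div_betaB_succ {k : ℕ} (hk : k ≤ n) (j : ℕ) :
    (∫ s in Ioi (0 : ℝ), s ^ j * (1 + s) ^ (-((n : ℝ) + j + 2)) * s ^ k) / betaB (j + 1) n =
      (j + 1).ascFactorial k / n.descFactorial k := by
  rw [integral_pow_mul_one_add_rpow_mul_pow hk, betaB_succ_eq_factorial,
    ← Nat.factorial_mul_descFactorial hk, ← Nat.factorial_mul_ascFactorial]
  have hdesc : (n.descFactorial k : ℝ) ≠ 0 :=
    Nat.cast_ne_zero.mpr (Nat.descFactorial_pos.mpr hk).ne'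
  push_cast
  field_simp

theorem BDop_pow_succ {k : ℕ} (hk : k + 1 ≤ n) (hρ : 1 < ρ)
    (hG : ∀ s ∈ ball (0 : ℝ) ρ, HasSum (fun j => Θ j (n * x) * s ^ j) (G s)) :
    BDop ξ S T U V Θ n (fun t => t ^ (k + 1)) x =
      (S 1 * ξ (pnx T U V n x))⁻¹ *
        (iteratedDeriv (k + 1) (fun s => s ^ k * G s) 1 / n.descFactorial (k + 1)) := by
  have hshift : ∀ s ∈ ball (0 : ℝ) ρ, HasSum
      (fun j => Function.extend (· + k) (fun j => Θ j (n * x)) 0 j * s ^ j) (s ^ k * G s) :=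
    fun s hs => hasSum_extend_add_mul_pow <| by
      simpa only [pow_add, mul_assoc, mul_comm (s ^ k)] using (hG s hs).mul_right (s ^ k)
  have hmoment := hasSum_iteratedDeriv_of_hasSum_mul_pow hshift (k + 1) 1
    (mem_ball_zero_iff.mpr (by rwa [norm_one]))
  rw [BDop, zero_pow k.succ_ne_zero, mul_zero, zero_add,
    ← (hmoment.div_const (n.descFactorial (k + 1) : ℝ)).tsum_eq]
  congr 1
  refine tsum_congr fun j => ?_
  rw [div_mul_eq_mul_div, mul_div_assoc, integral_div_betaB_succ hk, one_pow, mul_one,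
    ← add_assoc, add_right_comm, (add_left_injective k).extend_apply]
  ring

theorem BDop_sq (hρ : 1 < ρ) (hn : 2 ≤ n) {φ : ℝ → ℝ}
    (hξ : ContDiffAt ℝ 2 ξ (pnx T U V n x)) (hS : ContDiffAt ℝ 2 S 1) (hφ : ContDiffAt ℝ 2 φ 1)
    (hφ1 : φ 1 = pnx T U V n x)
    (hgen : ∀ s ∈ ball (0 : ℝ) ρ, HasSum (fun j => Θ j (n * x) * s ^ j) (S s * ξ (φ s)))
    (hS1 : S 1 ≠ 0) (hξp : ξ (pnx T U V n x) ≠ 0) :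
    BDop ξ S T U V Θ n (fun t => t ^ 2) x =
      (deriv (deriv ξ) (pnx T U V n x) / ξ (pnx T U V n x) * deriv φ 1 ^ 2 +
        deriv ξ (pnx T U V n x) / ξ (pnx T U V n x) *
          (deriv (deriv φ) 1 + 2 * (1 + deriv S 1 / S 1) * deriv φ 1) +
        (2 * deriv S 1 + deriv (deriv S) 1) / S 1) / (n * (n - 1)) := by
  have hA' : deriv (fun s => s * S s) 1 = S 1 + deriv S 1 := by
    simpa only [one_mul] using
      ((hasDerivAt_id' 1).fun_mul (hS.differentiableAt two_ne_zero).hasDerivAt).deriv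
  rw [BDop_pow_succ hn hρ hgen, Nat.cast_descFactorial_two]
  rw [← hφ1] at hξ hξp ⊢
  simp only [pow_one, ← mul_assoc]
  rw [iteratedDeriv_two_mul_comp (A := fun s => s * S s) (by fun_prop) hξ hφ,
    iteratedDeriv_two_id_mul hS, hA']
  simp only [iteratedDeriv_succ, iteratedDeriv_zero]
  field_simp
  ring

theorem stmt5_general (hρ : 1 < ρ) (hn : 2 ≤ n)
    (hξ : ContDiffAt ℝ 2 ξ (pnx T U V n x)) (hS : ContDiffAt ℝ 2 S 1) (hT : ContDiffAt ℝ 2 T 1)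
    (hU : ContDiffAt ℝ 2 U 1) (hV : ContDiffAt ℝ 2 V 1)
    (hgen : ∀ s ∈ ball (0 : ℝ) ρ, HasSum (fun j => Θ j (n * x) * s ^ j)
      (S s * ξ ((n * x) ^ 2 * T s + n * x * U s + V s)))
    (hS1 : S 1 ≠ 0) (hξp : ξ (pnx T U V n x) ≠ 0) :
    BDop ξ S T U V Θ n (fun t => t ^ 2) x =
      (deriv (deriv ξ) (pnx T U V n x) / ξ (pnx T U V n x) *
          ((n * x) ^ 2 * deriv T 1 + n * x * deriv U 1 + deriv V 1) ^ 2 +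
        deriv ξ (pnx T U V n x) / ξ (pnx T U V n x) *
          ((n * x) ^ 2 * deriv (deriv T) 1 + n * x * deriv (deriv U) 1 + deriv (deriv V) 1 +
            2 * (1 + deriv S 1 / S 1) *
              ((n * x) ^ 2 * deriv T 1 + n * x * deriv U 1 + deriv V 1)) +
        (2 * deriv S 1 + deriv (deriv S) 1) / S 1) / (n * (n - 1)) := by
  have hφ' := iteratedDeriv_mul_add_mul_add (k := 1) (hT.of_le one_le_two)
    (hU.of_le one_le_two) (hV.of_le one_le_two) ((n * x) ^ 2) (n * x)
  have hφ'' := iteratedDeriv_mul_add_mul_add (k := 2) hT hU hV ((n * x) ^ 2) (n * x)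
  have hφ1 : (n * x) ^ 2 * T 1 + n * x * U 1 + V 1 = pnx T U V n x := by rw [pnx, mul_pow]
  simp only [iteratedDeriv_succ, iteratedDeriv_zero] at hφ' hφ''
  rw [BDop_sq hρ hn hξ hS (by fun_prop) hφ1 hgen hS1 hξp, hφ', hφ'']

end Operator

theorem stmt5
    (ρ : ℝ) (hρ : 1 < ρ)
    (ξ S T U V : ℝ → ℝ) (Θ : ℕ → ℝ → ℝ)
    (p q r u v : ℕ → ℝ)
    (hξser : ∀ t : ℝ, HasSum (fun j : ℕ => p j * t ^ j) (ξ t))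
    (hξnn : ∀ t : ℝ, 0 ≤ ξ t)
    (hSser : ∀ s ∈ Set.Ioo (-ρ) ρ, HasSum (fun j : ℕ => q j * s ^ j) (S s))
    (hTser : ∀ s ∈ Set.Ioo (-ρ) ρ, HasSum (fun j : ℕ => r j * s ^ (j + 1)) (T s))
    (hUser : ∀ s ∈ Set.Ioo (-ρ) ρ, HasSum (fun j : ℕ => u j * s ^ (j + 2)) (U s))
    (hVser : ∀ s ∈ Set.Ioo (-ρ) ρ, HasSum (fun j : ℕ => v j * s ^ (j + 3)) (V s))
    (hS1 : 0 < S 1)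
    (hT'1 : deriv T 1 = 0) (hT''1 : deriv (deriv T) 1 = 0) (hU'1 : deriv U 1 = 1)
    (hΘnn : ∀ (j : ℕ) (y : ℝ), 0 ≤ y → 0 ≤ Θ j y)
    (hgen : ∀ y : ℝ, 0 ≤ y → ∀ s ∈ Set.Ioo (-ρ) ρ,
      HasSum (fun j : ℕ => Θ j y * s ^ j) (S s * ξ (y ^ 2 * T s + y * U s + V s)))
    (hξp : ∀ (m : ℕ), 1 ≤ m → ∀ y : ℝ, 0 ≤ y → 0 < ξ (pnx T U V m y))
    (n : ℕ) (hn : 2 ≤ n) (x : ℝ) (hx : 0 ≤ x) :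
    BDop ξ S T U V Θ n (fun t => t ^ 2) x =
      (n : ℝ) / ((n : ℝ) - 1) *
          (deriv (deriv ξ) (pnx T U V n x) / ξ (pnx T U V n x)) * x ^ 2 +
        (x / ((n : ℝ) - 1)) *
          (2 * deriv V 1 * (deriv (deriv ξ) (pnx T U V n x) / ξ (pnx T U V n x)) +
            (2 + 2 * deriv S 1 / S 1 + deriv (deriv U) 1) *
              (deriv ξ (pnx T U V n x) / ξ (pnx T U V n x))) +
        (1 / ((n : ℝ) * ((n : ℝ) - 1))) *
          ((deriv V 1) ^ 2 * (deriv (deriv ξ) (pnx T U V n x) / ξ (pnx T U V n x)) +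
            (2 * (deriv S 1 / S 1) * deriv V 1 + 2 * deriv V 1 + deriv (deriv V) 1) *
              (deriv ξ (pnx T U V n x) / ξ (pnx T U V n x)) +
            (2 * deriv S 1 + deriv (deriv S) 1) / S 1) := by
  simp only [← Real.ball_zero_eq_Ioo] at hSser hTser hUser hVser hgen
  have h1 : (1 : ℝ) ∈ ball 0 ρ := by simpa
  have hn0 : (n : ℝ) ≠ 0 := by positivity
  rw [stmt5_general hρ hn
    (contDiffAt_of_hasSum_mul_pow_add 0 (fun t _ => hξser t) (mem_ball_zero_iff.mpr (lt_add_one _)))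
    (contDiffAt_of_hasSum_mul_pow_add 0 hSser h1) (contDiffAt_of_hasSum_mul_pow_add 1 hTser h1)
    (contDiffAt_of_hasSum_mul_pow_add 2 hUser h1) (contDiffAt_of_hasSum_mul_pow_add 3 hVser h1)
    (hgen _ (by positivity)) hS1.ne' (hξp n (by omega) x hx).ne', hT'1, hT''1, hU'1]
  field_simp
  ring
end

section
/- Let 0 < r ≤ 1 and let f:[0,∞)→ℝ be a continuous function of at most polynomial growth belonging to the Lipschitz-type class Lip*_K, i.e. |f(s) − f(x)| ≤ K·|s−x|^r/(s+x)^{r/2} for all x ∈ (0,∞) and s ∈ [0,∞). Then for every x > 0 and every integer n ≥ 2, |B̃_n(f;x) − f(x)| ≤ (K/x^{r/2})·( B̃_n((t−x)²;x) )^{r/2}, where B̃_n((t−x)²;x) denotes the operator applied to t ↦ (t−x)². -/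
open Real MeasureTheory Filter Topology

/-! `B̃_n(f; x)` is the expectation of `f` under a probability measure on `[0, ∞)`: the mixture,
with weights `Θ_j(nx) / (S(1) ξ(p_n(x)))`, of the point mass at `0` and of the beta prime laws with
parameters `j` and `n + 1`; the weights add up to `1` by the generating relation at `s = 1`. The
Lipschitz condition gives `|f(s) - f(x)| ≤ (K / x^{r/2}) ((s - x)²)^{r/2}`, and Jensen's inequality
for the concave function `t ↦ t^{r/2}` concludes. The mixture has a finite second moment because the
`j`-th law has second moment `j (j + 1) / (n (n - 1))` and the generating series converges at some
`s > 1`. -/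

section Series

variable {𝕜 : Type*} [NormedField 𝕜] [CompleteSpace 𝕜]

lemma summable_pow_mul_of_summable_mul_pow {a : ℕ → 𝕜} {z : 𝕜} (hz : 1 < ‖z‖)
    (h : Summable fun j ↦ a j * z ^ j) (k : ℕ) : Summable fun j : ℕ ↦ (j : 𝕜) ^ k * a j := by
  have hz0 : z ≠ 0 := norm_pos_iff.1 (zero_lt_one.trans hz)
  have hgeom : Summable fun j : ℕ ↦ ‖(j : 𝕜) ^ k * z⁻¹ ^ j‖ :=
    summable_norm_pow_mul_geometric_of_norm_lt_one k (by
      rw [norm_inv]; exact inv_lt_one_of_one_lt₀ hz)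
  have hbdd : (fun j ↦ a j * z ^ j) =O[atTop] fun _ ↦ (1 : ℝ) :=
    h.tendsto_atTop_zero.isBigO_one ℝ
  have hprod := (Asymptotics.isBigO_refl (fun j : ℕ ↦ (j : 𝕜) ^ k * z⁻¹ ^ j) atTop).norm_right.mul
    hbdd
  simp only [mul_one] at hprod
  refine summable_of_isBigO_nat hgeom (hprod.congr_left fun j ↦ ?_)
  rw [inv_pow]
  field_simp

end Series

section Jensen

variable {Ω : Type*} {mΩ : MeasurableSpace Ω} {μ : Measure Ω} {g : Ω → ℝ} {α : ℝ}

lemma integrable_rpow_of_le_one [IsFiniteMeasure μ] (hg : Integrable g μ) (hg0 : 0 ≤ᵐ[μ] g)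
    (hα0 : 0 ≤ α) (hα1 : α ≤ 1) : Integrable (fun ω ↦ g ω ^ α) μ := by
  refine (integrable_norm_rpow_of_le hg.aestronglyMeasurable hα0 zero_le_one hα1
    (by simpa using hg.norm)).congr ?_
  filter_upwards [hg0] with ω hω
  rw [Real.norm_of_nonneg hω]

lemma integral_rpow_le_rpow_integral [IsProbabilityMeasure μ] (hg : Integrable g μ)
    (hg0 : 0 ≤ᵐ[μ] g) (hα0 : 0 ≤ α) (hα1 : α ≤ 1) :
    ∫ ω, g ω ^ α ∂μ ≤ (∫ ω, g ω ∂μ) ^ α :=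
  (Real.concaveOn_rpow hα0 hα1).le_map_integral
    (Real.continuous_rpow_const hα0).continuousOn isClosed_Ici hg0 hg
    (integrable_rpow_of_le_one hg hg0 hα0 hα1)

variable {E : Type*} [NormedAddCommGroup E] {f : Ω → E} {c : E} {L : ℝ}

lemma integrable_of_norm_sub_le_mul_rpow [IsFiniteMeasure μ] (hf : AEStronglyMeasurable f μ)
    (hg : Integrable g μ) (hg0 : 0 ≤ᵐ[μ] g) (hα0 : 0 ≤ α) (hα1 : α ≤ 1)
    (hfg : ∀ᵐ ω ∂μ, ‖f ω - c‖ ≤ L * g ω ^ α) : Integrable f μ := by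
  have hsub : Integrable (fun ω ↦ f ω - c) μ :=
    ((integrable_rpow_of_le_one hg hg0 hα0 hα1).const_mul L).mono'
      (hf.sub aestronglyMeasurable_const) hfg
  simpa only [Pi.add_def, sub_add_cancel] using hsub.add (integrable_const c)

lemma norm_integral_sub_le_mul_rpow_integral [NormedSpace ℝ E] [CompleteSpace E]
    [IsProbabilityMeasure μ] (hf : Integrable f μ)
    (hg : Integrable g μ) (hg0 : 0 ≤ᵐ[μ] g) (hα0 : 0 ≤ α) (hα1 : α ≤ 1) (hL : 0 ≤ L)
    (hfg : ∀ᵐ ω ∂μ, ‖f ω - c‖ ≤ L * g ω ^ α) :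
    ‖∫ ω, f ω ∂μ - c‖ ≤ L * (∫ ω, g ω ∂μ) ^ α :=
  calc ‖∫ ω, f ω ∂μ - c‖ = ‖∫ ω, (f ω - c) ∂μ‖ := by
        rw [integral_sub hf (integrable_const c), integral_const, probReal_univ, one_smul]
    _ ≤ ∫ ω, L * g ω ^ α ∂μ :=
        norm_integral_le_of_norm_le ((integrable_rpow_of_le_one hg hg0 hα0 hα1).const_mul L) hfg
    _ = L * ∫ ω, g ω ^ α ∂μ := integral_const_mul _ _
    _ ≤ L * (∫ ω, g ω ∂μ) ^ α :=
        mul_le_mul_of_nonneg_left (integral_rpow_le_rpow_integral hg hg0 hα0 hα1) hL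

end Jensen

section Mixture

variable {ι X : Type*} {mX : MeasurableSpace X} {w : ι → ℝ} {ν : ι → Measure X}

/-- The mixture `∑ i, w i • ν i` of a family of measures, with real weights `w i`. Negative weights
are read as `0`. -/
noncomputable def mixture (w : ι → ℝ) (ν : ι → Measure X) : Measure X :=
  Measure.sum fun i ↦ ENNReal.ofReal (w i) • ν i

lemma isProbabilityMeasure_mixture [∀ i, IsProbabilityMeasure (ν i)] (hw0 : ∀ i, 0 ≤ w i)
    (hw : HasSum w 1) : IsProbabilityMeasure (mixture w ν) where
  measure_univ := by
    simp only [mixture, Measure.sum_apply _ MeasurableSet.univ, Measure.smul_apply, measure_univ,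
      smul_eq_mul, mul_one]
    rw [← ENNReal.ofReal_tsum_of_nonneg hw0 hw.summable, hw.tsum_eq, ENNReal.ofReal_one]

lemma ae_mixture [Countable ι] {P : X → Prop} (h : ∀ i, ∀ᵐ a ∂ν i, P a) :
    ∀ᵐ a ∂mixture w ν, P a :=
  Measure.ae_sum_iff.2 fun i ↦ Measure.ae_smul_measure (h i) _

variable {E : Type*} [NormedAddCommGroup E] {f : X → E}

lemma aestronglyMeasurable_mixture [Countable ι] (hf : ∀ i, AEStronglyMeasurable f (ν i)) :
    AEStronglyMeasurable f (mixture w ν) :=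
  AEStronglyMeasurable.sum_measure fun i ↦ (hf i).smul_measure _

lemma integrable_mixture [Countable ι] (hw0 : ∀ i, 0 ≤ w i) (hf : ∀ i, Integrable f (ν i))
    (h : Summable fun i ↦ w i * ∫ a, ‖f a‖ ∂ν i) : Integrable f (mixture w ν) :=
  integrable_sum_measure (fun i ↦ (hf i).smul_measure ENNReal.ofReal_ne_top) (by
    simpa only [integral_smul_measure, ENNReal.toReal_ofReal (hw0 _), smul_eq_mul] using h)

lemma hasSum_integral_mixture [NormedSpace ℝ E] (hw0 : ∀ i, 0 ≤ w i)
    (hf : Integrable f (mixture w ν)) :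
    HasSum (fun i ↦ w i • ∫ a, f a ∂ν i) (∫ a, f a ∂mixture w ν) := by
  simpa only [mixture, integral_smul_measure, ENNReal.toReal_ofReal (hw0 _)] using
    hasSum_integral_measure hf

end Mixture

section BetaPrime

open ProbabilityTheory Set

variable {a b : ℝ}

lemma bijOn_div_one_sub : BijOn (fun x : ℝ ↦ x / (1 - x)) (Ioo 0 1) (Ioi 0) := by
  refine ⟨fun x hx ↦ div_pos hx.1 (sub_pos.2 hx.2), fun x hx y hy hxy ↦ ?_, fun s hs ↦ ?_⟩
  · have hx1 : 1 - x ≠ 0 := (sub_pos.2 hx.2).ne'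
    have hy1 : 1 - y ≠ 0 := (sub_pos.2 hy.2).ne'
    rw [div_eq_div_iff hx1 hy1] at hxy
    linarith
  · have hs0 : 0 < s := hs
    refine ⟨s / (1 + s), ⟨by positivity, (div_lt_one (by positivity)).2 (by linarith)⟩, ?_⟩
    field_simp
    ring

lemma hasDerivAt_div_one_sub {x : ℝ} (hx : x ≠ 1) :
    HasDerivAt (fun x : ℝ ↦ x / (1 - x)) ((1 - x) ^ 2)⁻¹ x := by
  have hx' : 1 - x ≠ 0 := sub_ne_zero.2 hx.symm
  convert! (hasDerivAt_id x).div ((hasDerivAt_id x).const_sub 1) hx' using 1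
  simp only [id_eq]
  field_simp
  ring

/-- The density of the beta prime distribution with shape parameters `a` and `b`, as a formula that
is meaningful on `(0, ∞)` only. -/
noncomputable def betaPrimePDFReal (a b s : ℝ) : ℝ :=
  s ^ (a - 1) * (1 + s) ^ (-(a + b)) / beta a b

@[fun_prop]
lemma measurable_betaPrimePDFReal (a b : ℝ) : Measurable (betaPrimePDFReal a b) := by
  unfold betaPrimePDFReal
  fun_prop

lemma betaPrimePDFReal_nonneg (ha : 0 < a) (hb : 0 < b) {s : ℝ} (hs : 0 ≤ s) :
    0 ≤ betaPrimePDFReal a b s := by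
  have := beta_pos ha hb
  unfold betaPrimePDFReal
  positivity

lemma betaPrimePDFReal_div_one_sub {x : ℝ} (hx : x ∈ Ioo (0 : ℝ) 1) :
    ((1 - x) ^ 2)⁻¹ * betaPrimePDFReal a b (x / (1 - x)) =
      1 / beta a b * x ^ (a - 1) * (1 - x) ^ (b - 1) := by
  have hx0 : 0 < x := hx.1
  have hx1 : 0 < 1 - x := sub_pos.2 hx.2
  have hone : 1 + x / (1 - x) = (1 - x)⁻¹ := by field_simp; ring
  have hexp : (1 - x) ^ (a + b) = (1 - x) ^ (a - 1) * (1 - x) ^ (b - 1) * (1 - x) ^ 2 := by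
    rw [← rpow_natCast, ← rpow_add hx1, ← rpow_add hx1]
    congr 1
    push_cast
    ring
  have hne : (1 - x) ^ (a - 1) ≠ 0 := (rpow_pos_of_pos hx1 _).ne'
  rw [betaPrimePDFReal, hone, div_rpow hx0.le hx1.le, inv_rpow hx1.le, ← rpow_neg hx1.le, neg_neg,
    hexp]
  field_simp

lemma lintegral_betaPrimePDFReal (ha : 0 < a) (hb : 0 < b) :
    ∫⁻ s in Ioi 0, ENNReal.ofReal (betaPrimePDFReal a b s) = 1 := by
  rw [← bijOn_div_one_sub.image_eq, lintegral_image_eq_lintegral_abs_deriv_mul measurableSet_Ioo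
    (fun x hx ↦ (hasDerivAt_div_one_sub hx.2.ne).hasDerivWithinAt) bijOn_div_one_sub.injOn,
    ← lintegral_betaPDF_eq_one ha hb, lintegral_betaPDF]
  refine setLIntegral_congr_fun measurableSet_Ioo fun x hx ↦ ?_
  rw [← ENNReal.ofReal_mul (abs_nonneg _), abs_of_nonneg (by positivity),
    betaPrimePDFReal_div_one_sub hx]

/-- The beta prime distribution with shape parameters `a` and `b`: the law of `X / (1 - X)` for `X`
beta distributed. -/
noncomputable def betaPrimeMeasure (a b : ℝ) : Measure ℝ :=
  (volume.restrict (Ioi 0)).withDensity fun s ↦ ENNReal.ofReal (betaPrimePDFReal a b s)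

lemma isProbabilityMeasure_betaPrimeMeasure (ha : 0 < a) (hb : 0 < b) :
    IsProbabilityMeasure (betaPrimeMeasure a b) where
  measure_univ := by simp [betaPrimeMeasure, lintegral_betaPrimePDFReal ha hb]

lemma betaPrimeMeasure_absolutelyContinuous (a b : ℝ) :
    betaPrimeMeasure a b ≪ volume.restrict (Ioi 0) :=
  withDensity_absolutelyContinuous _ _

lemma ae_pos_betaPrimeMeasure (a b : ℝ) : ∀ᵐ s ∂betaPrimeMeasure a b, 0 < s :=
  (betaPrimeMeasure_absolutelyContinuous a b).ae_le (ae_restrict_mem measurableSet_Ioi)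

lemma toReal_ofReal_betaPrimePDFReal_ae_eq (ha : 0 < a) (hb : 0 < b) :
    (fun s ↦ (ENNReal.ofReal (betaPrimePDFReal a b s)).toReal)
      =ᵐ[volume.restrict (Ioi 0)] betaPrimePDFReal a b := by
  filter_upwards [ae_restrict_mem measurableSet_Ioi] with s hs
  exact ENNReal.toReal_ofReal (betaPrimePDFReal_nonneg ha hb (le_of_lt hs))

variable {E : Type*} [NormedAddCommGroup E] [NormedSpace ℝ E] {f : ℝ → E}

lemma integral_betaPrimeMeasure (ha : 0 < a) (hb : 0 < b) :
    ∫ s, f s ∂betaPrimeMeasure a b = ∫ s in Ioi 0, betaPrimePDFReal a b s • f s := by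
  rw [betaPrimeMeasure, integral_withDensity_eq_integral_toReal_smul (by fun_prop) (by simp)]
  refine integral_congr_ae ?_
  filter_upwards [toReal_ofReal_betaPrimePDFReal_ae_eq ha hb] with s hs
  rw [hs]

lemma integrable_betaPrimeMeasure_iff (ha : 0 < a) (hb : 0 < b) :
    Integrable f (betaPrimeMeasure a b) ↔
      IntegrableOn (fun s ↦ betaPrimePDFReal a b s • f s) (Ioi 0) := by
  rw [betaPrimeMeasure, integrable_withDensity_iff_integrable_smul' (by fun_prop) (by simp),
    IntegrableOn]
  refine integrable_congr ?_
  filter_upwards [toReal_ofReal_betaPrimePDFReal_ae_eq ha hb] with s hs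
  rw [hs]

lemma integrableOn_betaPrimePDFReal (ha : 0 < a) (hb : 0 < b) :
    IntegrableOn (betaPrimePDFReal a b) (Ioi 0) := by
  have := isProbabilityMeasure_betaPrimeMeasure ha hb
  simpa using (integrable_betaPrimeMeasure_iff ha hb).1 (integrable_const (1 : ℝ))

lemma integral_betaPrimePDFReal (ha : 0 < a) (hb : 0 < b) :
    ∫ s in Ioi 0, betaPrimePDFReal a b s = 1 := by
  have := isProbabilityMeasure_betaPrimeMeasure ha hb
  simpa using (integral_betaPrimeMeasure (f := fun _ ↦ (1 : ℝ)) ha hb).symm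

lemma beta_add_one_sub_one (ha : 0 < a) (hb : 1 < b) :
    beta (a + 1) (b - 1) = a / (b - 1) * beta a b := by
  have hb1 : b - 1 ≠ 0 := (sub_pos.2 hb).ne'
  have hΓb : Gamma b = (b - 1) * Gamma (b - 1) := by
    rw [← Real.Gamma_add_one hb1, sub_add_cancel]
  rw [beta, beta, Real.Gamma_add_one ha.ne', hΓb, add_add_sub_cancel]
  field_simp

lemma betaPrimePDFReal_mul_self (ha : 0 < a) (hb : 1 < b) {s : ℝ} (hs : 0 < s) :
    betaPrimePDFReal a b s * s = a / (b - 1) * betaPrimePDFReal (a + 1) (b - 1) s := by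
  have hb1 : b - 1 ≠ 0 := (sub_pos.2 hb).ne'
  have hβ : beta a b ≠ 0 := (beta_pos ha (zero_lt_one.trans hb)).ne'
  have hpow : s ^ a = s ^ (a - 1) * s := by
    rw [← rpow_add_one hs.ne', sub_add_cancel]
  rw [betaPrimePDFReal, betaPrimePDFReal, beta_add_one_sub_one ha hb, add_sub_cancel_right,
    add_add_sub_cancel, hpow]
  field_simp

lemma betaPrimePDFReal_mul_sq (ha : 0 < a) (hb : 2 < b) {s : ℝ} (hs : 0 < s) :
    betaPrimePDFReal a b s * s ^ 2 =
      a * (a + 1) / ((b - 1) * (b - 2)) * betaPrimePDFReal (a + 2) (b - 2) s := by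
  rw [pow_two, ← mul_assoc, betaPrimePDFReal_mul_self ha (by linarith) hs, mul_assoc,
    betaPrimePDFReal_mul_self (by linarith) (by linarith) hs, ← mul_assoc, div_mul_div_comm]
  congr 2 <;> ring

lemma integrable_sq_betaPrimeMeasure (ha : 0 < a) (hb : 2 < b) :
    Integrable (fun s ↦ s ^ 2) (betaPrimeMeasure a b) := by
  have hint : IntegrableOn (betaPrimePDFReal (a + 2) (b - 2)) (Ioi 0) :=
    integrableOn_betaPrimePDFReal (by linarith) (by linarith)
  rw [integrable_betaPrimeMeasure_iff ha (by linarith)]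
  exact IntegrableOn.congr_fun (hint.const_mul _)
    (fun s hs ↦ (betaPrimePDFReal_mul_sq ha hb hs).symm) measurableSet_Ioi

lemma integral_sq_betaPrimeMeasure (ha : 0 < a) (hb : 2 < b) :
    ∫ s, s ^ 2 ∂betaPrimeMeasure a b = a * (a + 1) / ((b - 1) * (b - 2)) := by
  simp_rw [integral_betaPrimeMeasure ha (by linarith : 0 < b), smul_eq_mul]
  rw [setIntegral_congr_fun measurableSet_Ioi fun s hs ↦ betaPrimePDFReal_mul_sq ha hb hs,
    integral_const_mul, integral_betaPrimePDFReal (by linarith) (by linarith), mul_one]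

end BetaPrime

section Operator

open Set

variable {n : ℕ}

lemma betaB_eq_beta (j n : ℕ) : betaB j n = ProbabilityTheory.beta j (n + 1) := by
  rw [betaB, ProbabilityTheory.beta, add_assoc]

lemma betaPrimePDFReal_natCast_add_one (j n : ℕ) (s : ℝ) :
    betaPrimePDFReal (j + 1) (n + 1) s =
      s ^ j * (1 + s) ^ (-((n : ℝ) + (j : ℝ) + 2)) / betaB (j + 1) n := by
  rw [betaPrimePDFReal, betaB_eq_beta, add_sub_cancel_right, rpow_natCast, Nat.cast_add_one]
  congr 4
  ring

/-- The law against which the `j`-th term of `B̃_n` averages its argument: the point mass at `0`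
for `j = 0`, the beta prime distribution with parameters `j` and `n + 1` for `j ≥ 1`. -/
noncomputable def durrmeyerLaw (n : ℕ) : ℕ → Measure ℝ
  | 0 => Measure.dirac 0
  | j + 1 => betaPrimeMeasure (j + 1) (n + 1)

instance isProbabilityMeasure_durrmeyerLaw (n j : ℕ) : IsProbabilityMeasure (durrmeyerLaw n j) :=
  match j with
  | 0 => Measure.dirac.isProbabilityMeasure
  | _ + 1 => isProbabilityMeasure_betaPrimeMeasure (by positivity) (by positivity)

lemma ae_nonneg_durrmeyerLaw (n j : ℕ) : ∀ᵐ s ∂durrmeyerLaw n j, 0 ≤ s :=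
  match j with
  | 0 => (ae_dirac_iff measurableSet_Ici).2 le_rfl
  | _ + 1 => (ae_pos_betaPrimeMeasure _ _).mono fun _ ↦ le_of_lt

lemma aestronglyMeasurable_durrmeyerLaw {f : ℝ → ℝ}
    (hf : AEStronglyMeasurable f (volume.restrict (Ioi 0))) (n j : ℕ) :
    AEStronglyMeasurable f (durrmeyerLaw n j) :=
  match j with
  | 0 => aestronglyMeasurable_dirac
  | _ + 1 => hf.mono_ac (betaPrimeMeasure_absolutelyContinuous _ _)

lemma integral_durrmeyerLaw_succ (n j : ℕ) (f : ℝ → ℝ) :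
    ∫ s, f s ∂durrmeyerLaw n (j + 1) =
      (∫ s in Ioi 0, s ^ j * (1 + s) ^ (-((n : ℝ) + (j : ℝ) + 2)) * f s) / betaB (j + 1) n := by
  rw [durrmeyerLaw, integral_betaPrimeMeasure (by positivity) (by positivity), ← integral_div]
  simp_rw [betaPrimePDFReal_natCast_add_one, smul_eq_mul, div_mul_eq_mul_div]

lemma integrable_sq_durrmeyerLaw (hn : 2 ≤ n) (j : ℕ) :
    Integrable (fun s ↦ s ^ 2) (durrmeyerLaw n j) :=
  match j with
  | 0 => integrable_dirac (by simp)
  | _ + 1 => integrable_sq_betaPrimeMeasure (by positivity) (by norm_cast; omega)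

lemma integral_sq_durrmeyerLaw (hn : 2 ≤ n) (j : ℕ) :
    ∫ s, s ^ 2 ∂durrmeyerLaw n j = (j : ℝ) * (j + 1) / (n * (n - 1)) :=
  match j with
  | 0 => by simp [durrmeyerLaw]
  | j + 1 => by
    rw [durrmeyerLaw, integral_sq_betaPrimeMeasure (by positivity) (by norm_cast; omega)]
    push_cast
    congr 2 <;> ring

variable {w : ℕ → ℝ}

lemma ae_nonneg_mixture_durrmeyerLaw (n : ℕ) (w : ℕ → ℝ) :
    ∀ᵐ s ∂mixture w (durrmeyerLaw n), 0 ≤ s :=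
  ae_mixture (ae_nonneg_durrmeyerLaw n)

lemma integrable_sq_mixture_durrmeyerLaw (hn : 2 ≤ n) (hw0 : ∀ j, 0 ≤ w j)
    (hw : Summable fun j : ℕ ↦ (j : ℝ) ^ 2 * w j) :
    Integrable (fun s ↦ s ^ 2) (mixture w (durrmeyerLaw n)) := by
  refine integrable_mixture hw0 (integrable_sq_durrmeyerLaw hn) ?_
  simp_rw [norm_pow, norm_eq_abs, sq_abs, integral_sq_durrmeyerLaw hn]
  have hn1 : (1 : ℝ) ≤ n := by exact_mod_cast one_le_two.trans hn
  have hC : 0 ≤ (n * (n - 1) : ℝ) := by nlinarith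
  refine Summable.of_nonneg_of_le (fun j ↦ mul_nonneg (hw0 j) (by positivity)) (fun j ↦ ?_)
    (hw.mul_left (2 / (n * (n - 1)) : ℝ))
  have hj : (j : ℝ) ≤ j ^ 2 := by exact_mod_cast Nat.le_self_pow two_ne_zero j
  have hjj : (j : ℝ) * (j + 1) ≤ 2 * j ^ 2 := by linarith
  calc w j * (j * (j + 1) / (n * (n - 1)))
      ≤ w j * (2 * j ^ 2 / (n * (n - 1))) :=
        mul_le_mul_of_nonneg_left (div_le_div_of_nonneg_right hjj hC) (hw0 j)
    _ = 2 / (n * (n - 1)) * (j ^ 2 * w j) := by ring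

lemma integrable_sub_sq {μ : Measure ℝ} [IsFiniteMeasure μ] (h : Integrable (fun s ↦ s ^ 2) μ)
    (x : ℝ) : Integrable (fun s ↦ (s - x) ^ 2) μ := by
  have hL2 : MemLp (fun s : ℝ ↦ s) 2 μ :=
    (memLp_two_iff_integrable_sq aestronglyMeasurable_id).2 h
  exact (hL2.sub (memLp_const x)).integrable_sq

variable {ξ S T U V : ℝ → ℝ} {Θ : ℕ → ℝ → ℝ} {x : ℝ}

/-- The weight that `B̃_n(·;x)` gives to its `j`-th term. -/
noncomputable def durrmeyerWeight (ξ S T U V : ℝ → ℝ) (Θ : ℕ → ℝ → ℝ) (n : ℕ) (x : ℝ) (j : ℕ) : ℝ :=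
  Θ j (n * x) / (S 1 * ξ (pnx T U V n x))

/-- The law with respect to which `B̃_n(f;x)` is the expectation of `f`. -/
noncomputable def durrmeyerMeasure (ξ S T U V : ℝ → ℝ) (Θ : ℕ → ℝ → ℝ) (n : ℕ) (x : ℝ) :
    Measure ℝ :=
  mixture (durrmeyerWeight ξ S T U V Θ n x) (durrmeyerLaw n)

lemma BDop_eq_integral {f : ℝ → ℝ} (hw : ∀ j, 0 ≤ durrmeyerWeight ξ S T U V Θ n x j)
    (hf : Integrable f (durrmeyerMeasure ξ S T U V Θ n x)) :
    BDop ξ S T U V Θ n f x = ∫ s, f s ∂durrmeyerMeasure ξ S T U V Θ n x := by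
  have hsum := hasSum_integral_mixture hw hf
  rw [durrmeyerMeasure, ← hsum.tsum_eq, hsum.summable.tsum_eq_zero_add, BDop, mul_add,
    ← tsum_mul_left]
  simp_rw [integral_durrmeyerLaw_succ, durrmeyerLaw, integral_dirac, durrmeyerWeight, smul_eq_mul]
  congr 1
  · ring
  · exact tsum_congr fun j ↦ by ring

section BoasBuck

variable {ρ : ℝ} (hgen : ∀ s ∈ Ioo (-ρ) ρ, HasSum (fun j : ℕ ↦ Θ j (n * x) * s ^ j)
  (S s * ξ ((n * x) ^ 2 * T s + n * x * U s + V s)))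
include hgen

lemma hasSum_durrmeyerWeight (hρ : 1 < ρ) (hpos : 0 < S 1 * ξ (pnx T U V n x)) :
    HasSum (durrmeyerWeight ξ S T U V Θ n x) 1 := by
  have hsum := (hgen 1 ⟨by linarith, hρ⟩).div_const (S 1 * ξ (pnx T U V n x))
  rw [mul_pow, ← pnx, div_self hpos.ne'] at hsum
  simp only [one_pow, mul_one] at hsum
  exact hsum

lemma summable_sq_mul_durrmeyerWeight (hρ : 1 < ρ) :
    Summable fun j : ℕ ↦ (j : ℝ) ^ 2 * durrmeyerWeight ξ S T U V Θ n x j := by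
  obtain ⟨s, hs1, hsρ⟩ := exists_between hρ
  have hΘ := summable_pow_mul_of_summable_mul_pow (hs1.trans_le (le_abs_self s))
    (hgen s ⟨by linarith, hsρ⟩).summable 2
  simpa only [durrmeyerWeight, mul_div_assoc] using hΘ.div_const (S 1 * ξ (pnx T U V n x))

end BoasBuck

end Operator

lemma mul_abs_sub_rpow_div_le {K r s x : ℝ} (hK : 0 ≤ K) (hr : 0 ≤ r) (hs : 0 ≤ s) (hx : 0 < x) :
    K * |s - x| ^ r / (s + x) ^ (r / 2) ≤ K / x ^ (r / 2) * |s - x| ^ r := by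
  rw [div_mul_eq_mul_div]
  gcongr
  linarith

theorem stmt13_general {ρ : ℝ} (hρ : 1 < ρ) {ξ S T U V : ℝ → ℝ} {Θ : ℕ → ℝ → ℝ}
    {n : ℕ} (hn : 2 ≤ n) {x : ℝ} (hΘ : ∀ j, 0 ≤ Θ j (n * x))
    (hgen : ∀ s ∈ Set.Ioo (-ρ) ρ, HasSum (fun j : ℕ ↦ Θ j (n * x) * s ^ j)
      (S s * ξ ((n * x) ^ 2 * T s + n * x * U s + V s)))
    (hpos : 0 < S 1 * ξ (pnx T U V n x)) {r : ℝ} (hr0 : 0 ≤ r) (hr2 : r ≤ 2) {f : ℝ → ℝ}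
    (hf : AEStronglyMeasurable f (volume.restrict (Set.Ioi 0))) {L : ℝ} (hL : 0 ≤ L)
    (hfL : ∀ s, 0 ≤ s → |f s - f x| ≤ L * |s - x| ^ r) :
    |BDop ξ S T U V Θ n f x - f x| ≤
      L * BDop ξ S T U V Θ n (fun t ↦ (t - x) ^ 2) x ^ (r / 2) := by
  have hw0 (j : ℕ) : 0 ≤ durrmeyerWeight ξ S T U V Θ n x j := div_nonneg (hΘ j) hpos.le
  let μ : Measure ℝ := durrmeyerMeasure ξ S T U V Θ n x
  have : IsProbabilityMeasure μ :=
    isProbabilityMeasure_mixture hw0 (hasSum_durrmeyerWeight hgen hρ hpos)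
  have hsq : Integrable (fun s ↦ (s - x) ^ 2) μ :=
    integrable_sub_sq (μ := μ) (integrable_sq_mixture_durrmeyerLaw hn hw0
      (summable_sq_mul_durrmeyerWeight hgen hρ)) x
  have hsq0 : 0 ≤ᵐ[μ] fun s ↦ (s - x) ^ 2 := ae_of_all _ fun s ↦ sq_nonneg _
  have hbound : ∀ᵐ s ∂μ, ‖f s - f x‖ ≤ L * ((s - x) ^ 2) ^ (r / 2) := by
    filter_upwards [ae_nonneg_mixture_durrmeyerLaw n _] with s hs
    rw [← sq_abs, ← rpow_natCast_mul (abs_nonneg _), Nat.cast_two, mul_div_cancel₀ r two_ne_zero]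
    exact hfL s hs
  have hr1 : r / 2 ≤ 1 := by linarith
  have hfμ : AEStronglyMeasurable f μ :=
    aestronglyMeasurable_mixture (aestronglyMeasurable_durrmeyerLaw hf n)
  have hfint : Integrable f μ :=
    integrable_of_norm_sub_le_mul_rpow hfμ hsq hsq0 (by positivity) hr1 hbound
  rw [BDop_eq_integral hw0 hfint, BDop_eq_integral hw0 hsq]
  exact norm_integral_sub_le_mul_rpow_integral hfint hsq hsq0 (by positivity) hr1 hL hbound

theorem stmt13
    (ρ : ℝ) (hρ : 1 < ρ)
    (ξ S T U V : ℝ → ℝ) (Θ : ℕ → ℝ → ℝ)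
    (p q r u v : ℕ → ℝ)
    (hξser : ∀ t : ℝ, HasSum (fun j : ℕ => p j * t ^ j) (ξ t))
    (hξnn : ∀ t : ℝ, 0 ≤ ξ t)
    (hSser : ∀ s ∈ Set.Ioo (-ρ) ρ, HasSum (fun j : ℕ => q j * s ^ j) (S s))
    (hTser : ∀ s ∈ Set.Ioo (-ρ) ρ, HasSum (fun j : ℕ => r j * s ^ (j + 1)) (T s))
    (hUser : ∀ s ∈ Set.Ioo (-ρ) ρ, HasSum (fun j : ℕ => u j * s ^ (j + 2)) (U s))
    (hVser : ∀ s ∈ Set.Ioo (-ρ) ρ, HasSum (fun j : ℕ => v j * s ^ (j + 3)) (V s))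
    (hS1 : 0 < S 1)
    (hT'1 : deriv T 1 = 0) (hT''1 : deriv (deriv T) 1 = 0) (hU'1 : deriv U 1 = 1)
    (hΘnn : ∀ (j : ℕ) (y : ℝ), 0 ≤ y → 0 ≤ Θ j y)
    (hgen : ∀ y : ℝ, 0 ≤ y → ∀ s ∈ Set.Ioo (-ρ) ρ,
      HasSum (fun j : ℕ => Θ j y * s ^ j) (S s * ξ (y ^ 2 * T s + y * U s + V s)))
    (hξp : ∀ (m : ℕ), 1 ≤ m → ∀ y : ℝ, 0 ≤ y → 0 < ξ (pnx T U V m y))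
    (r : ℝ) (hr0 : 0 < r) (hr1 : r ≤ 1)
    (f : ℝ → ℝ) (hfc : ContinuousOn f (Set.Ici 0))
    (hfg : ∃ M σ : ℝ, 0 < M ∧ 0 < σ ∧ ∀ s : ℝ, 0 ≤ s → |f s| ≤ M * (1 + s ^ σ))
    (K : ℝ) (hK : 0 < K)
    (hlip : ∀ x : ℝ, 0 < x → ∀ s : ℝ, 0 ≤ s →
      |f s - f x| ≤ K * |s - x| ^ r / (s + x) ^ (r / 2))
    (x : ℝ) (hx : 0 < x) (n : ℕ) (hn : 2 ≤ n) :
    |BDop ξ S T U V Θ n f x - f x| ≤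
      K / x ^ (r / 2) * (BDop ξ S T U V Θ n (fun t => (t - x) ^ 2) x) ^ (r / 2) := by
  exact stmt13_general hρ hn (fun j ↦ hΘnn j _ (by positivity)) (hgen _ (by positivity))
    (mul_pos hS1 (hξp n (by omega) x hx.le)) hr0.le (by linarith)
    ((hfc.mono Set.Ioi_subset_Ici_self).aestronglyMeasurable measurableSet_Ioi) (by positivity)
    fun s hs ↦ (hlip x hx s hs).trans (mul_abs_sub_rpow_div_le hK.le hr0.le hs hx)
end
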